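/- arXiv:1207.5781 — 5 statements merged into one kernel-verified Lean document; each statement's English description precedes it below -/
import Mathlib

section
/- Let N ≥ 1 be an integer, h, p > 0, and let Q be an integer with 0 ≤ Q ≤ N. Then the function G_Q(q) = h·Σ_{i=0}^{Q} C(N,i)·q^i·(1−q)^{N−i}·(Q−i) + p·Σ_{i=Q}^{N} C(N,i)·q^i·(1−q)^{N−i}·(i−Q) is convex in q on the interval (0,1). -/
open Polynomial in
lemma nv_dS (N Q : ℕ) :
    derivative (∑ i ∈ Finset.range (Q + 1), bernsteinPolynomial ℝ N i) =
      -(N : ℝ[X]) * bernsteinPolynomial ℝ (N - 1) Q := by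
  induction Q with
  | zero => simp [bernsteinPolynomial.derivative_zero]
  | succ Q ih =>
    rw [Finset.sum_range_succ, derivative_add, ih, bernsteinPolynomial.derivative_succ]
    ring

open Polynomial in
noncomputable def nvA (N Q : ℕ) : ℝ[X] :=
  ∑ i ∈ Finset.range (Q + 1), bernsteinPolynomial ℝ N i * ((Q : ℝ[X]) - (i : ℝ[X]))

open Polynomial in
lemma nvA_succ (N Q : ℕ) :
    nvA N (Q + 1) = nvA N Q + ∑ i ∈ Finset.range (Q + 1), bernsteinPolynomial ℝ N i := by
  unfold nvA
  rw [Finset.sum_range_succ, ← Finset.sum_add_distrib]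
  simp only [sub_self, mul_zero, add_zero]
  refine Finset.sum_congr rfl fun i _ => ?_
  push_cast
  ring

open Polynomial in
lemma nvA_d (N Q : ℕ) :
    derivative (nvA N (Q + 1)) =
      -(N : ℝ[X]) * ∑ i ∈ Finset.range (Q + 1), bernsteinPolynomial ℝ (N - 1) i := by
  induction Q with
  | zero => rw [nvA_succ, derivative_add, nv_dS]; simp [nvA]
  | succ Q ih =>
    rw [nvA_succ, derivative_add, ih, nv_dS, Finset.sum_range_succ _ (Q + 1)]
    ring

open Polynomial in
lemma nvA_dd (N Q : ℕ) :
    derivative (derivative (nvA N (Q + 1))) =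
      (N : ℝ[X]) * ((N - 1 : ℕ) : ℝ[X]) * bernsteinPolynomial ℝ (N - 1 - 1) Q := by
  rw [nvA_d, derivative_mul, nv_dS]
  simp
  ring

open Polynomial in
lemma nvA_dd_nonneg (N Q : ℕ) (q : ℝ) (h0 : 0 < q) (h1 : q < 1) :
    0 ≤ (derivative (derivative (nvA N Q))).eval q := by
  cases Q with
  | zero => simp [nvA]
  | succ Q =>
    have : 0 < 1 - q := by linarith
    rw [nvA_dd]
    simp only [bernsteinPolynomial, eval_mul, eval_natCast, eval_pow, eval_X, eval_sub, eval_one]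
    positivity

open Polynomial in
lemma nvA_convex (N Q : ℕ) : ConvexOn ℝ (Set.Ioo (0 : ℝ) 1) (fun q => (nvA N Q).eval q) := by
  have hd : ∀ P : ℝ[X], deriv (fun q => P.eval q) = fun q => (derivative P).eval q := by
    intro P; funext x; exact P.deriv
  refine convexOn_of_deriv2_nonneg (convex_Ioo _ _) (nvA N Q).continuous.continuousOn
    (nvA N Q).differentiable.differentiableOn ?_ ?_
  · rw [hd]; exact (derivative (nvA N Q)).differentiable.differentiableOn
  · intro x hx
    rw [interior_Ioo] at hx
    simp only [Function.iterate_succ, Function.iterate_zero, Function.comp, id, hd]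
    exact nvA_dd_nonneg N Q x hx.1 hx.2

open Polynomial in
lemma nv_total (N Q : ℕ) (q : ℝ) :
    ∑ i ∈ Finset.range (N + 1),
      (N.choose i : ℝ) * q ^ i * (1 - q) ^ (N - i) * ((i : ℝ) - (Q : ℝ)) = N * q - Q := by
  have h1 := congrArg (eval q) (bernsteinPolynomial.sum ℝ N)
  have h2 := congrArg (eval q) (bernsteinPolynomial.sum_smul ℝ N)
  simp only [bernsteinPolynomial, eval_finsetSum, nsmul_eq_mul, eval_mul, eval_natCast, eval_pow,
    eval_X, eval_sub, eval_one] at h1 h2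
  have h3 : (Q : ℝ) = Q * ∑ i ∈ Finset.range (N + 1),
      (N.choose i : ℝ) * q ^ i * (1 - q) ^ (N - i) := by rw [h1, mul_one]
  rw [← h2]
  refine Eq.trans ?_ (congrArg _ h3.symm)
  rw [Finset.mul_sum, ← Finset.sum_sub_distrib]
  exact Finset.sum_congr rfl fun i _ => by ring

/-- Convexity of the binomial-demand newsvendor cost `G_Q(q)` in the success
probability `q` on `(0,1)`, for fixed order quantity `0 ≤ Q ≤ N`. -/
theorem newsvendor_binomial_convex_in_q
    (N : ℕ) (hN : 1 ≤ N) (h p : ℝ) (hh : 0 < h) (hp : 0 < p)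
    (Q : ℕ) (hQ : Q ≤ N) :
    ConvexOn ℝ (Set.Ioo (0 : ℝ) 1) (fun q : ℝ =>
      h * ∑ i ∈ Finset.range (Q + 1),
            (N.choose i : ℝ) * q ^ i * (1 - q) ^ (N - i) * ((Q : ℝ) - (i : ℝ)) +
      p * ∑ i ∈ Finset.Icc Q N,
            (N.choose i : ℝ) * q ^ i * (1 - q) ^ (N - i) * ((i : ℝ) - (Q : ℝ))) := by
  have hA : ∀ q : ℝ, ∑ i ∈ Finset.range (Q + 1),
      (N.choose i : ℝ) * q ^ i * (1 - q) ^ (N - i) * ((Q : ℝ) - (i : ℝ)) = (nvA N Q).eval q := by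
    intro q
    simp [nvA, Polynomial.eval_finsetSum, bernsteinPolynomial]
  have hB : ∀ q : ℝ, ∑ i ∈ Finset.Icc Q N,
      (N.choose i : ℝ) * q ^ i * (1 - q) ^ (N - i) * ((i : ℝ) - (Q : ℝ)) =
        (nvA N Q).eval q + (N * q - Q) := by
    intro q
    rw [← hA, ← nv_total N Q q, Finset.sum_range_succ _ Q,
      ← Finset.sum_range_add_sum_Ico _ (show Q ≤ N + 1 by omega), sub_self, mul_zero, add_zero,
      ← add_assoc, ← Finset.sum_add_distrib, Finset.sum_eq_zero (s := Finset.range Q), zero_add]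
    · refine Finset.sum_congr ?_ fun _ _ => rfl
      ext i; simp
    · intro i _; ring
  simp only [hA, hB]
  have hc := nvA_convex N Q
  refine ⟨hc.1, ?_⟩
  intro x hx y hy a b ha hb hab
  have h1 := mul_le_mul_of_nonneg_left (hc.2 hx hy ha hb hab) (add_pos hh hp).le
  simp only [smul_eq_mul] at h1 ⊢
  have hb' : b = 1 - a := by linarith
  subst hb'
  linarith
end

section
/- Let Q ≥ 1 be an integer and let F_P(λ,i) = e^{−λ}·Σ_{k=0}^{i} λ^k/k! denote the Poisson cumulative distribution function. Then the function λ ↦ Σ_{i=Q}^{∞} (1 − F_P(λ,i)) is twice differentiable on (0,∞) and its second derivative equals e^{−λ}·λ^{Q−1}/(Q−1)!, which is positive; hence λ ↦ Σ_{i=Q}^{∞} (1 − F_P(λ,i)) is convex on (0,∞). -/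
open Filter Topology in
theorem aux_deriv (n : ℕ) (l : ℝ) :
    HasDerivAt (fun l : ℝ => Real.exp (-l) * ∑ k ∈ Finset.range (n + 1), l ^ k / (k.factorial : ℝ))
      (-(Real.exp (-l) * l ^ n / (n.factorial : ℝ))) l := by
  have he : HasDerivAt (fun l : ℝ => Real.exp (-l)) (-Real.exp (-l)) l := by
    simpa using (hasDerivAt_neg l).exp
  induction n with
  | zero => simpa using he
  | succ n ih =>
    have h2 : HasDerivAt (fun l : ℝ => l ^ (n+1) / ((n+1).factorial : ℝ))
        (l ^ n / (n.factorial : ℝ)) l := by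
      have := (hasDerivAt_pow (n+1) l).div_const ((n+1).factorial : ℝ)
      refine this.congr_deriv ?_
      have h3 : (n.factorial : ℝ) ≠ 0 := by positivity
      rw [Nat.factorial_succ]; push_cast; field_simp
    have h := ih.add (he.mul h2)
    refine (h.congr_deriv ?_).congr_of_eventuallyEq (Eventually.of_forall fun x => ?_)
    · ring
    · simp only [Pi.add_apply, Pi.mul_apply]
      rw [Finset.sum_range_succ _ (n+1)]; ring

theorem aux_hasSum (l : ℝ) :
    HasSum (fun k : ℕ => Real.exp (-l) * (l ^ k / (k.factorial : ℝ))) 1 := by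
  have h : HasSum (fun k : ℕ => l ^ k / (k.factorial : ℝ)) (Real.exp l) := by
    rw [Real.exp_eq_exp_ℝ]; exact NormedSpace.expSeries_div_hasSum_exp l
  have := h.mul_left (Real.exp (-l))
  rwa [← Real.exp_add, neg_add_cancel, Real.exp_zero] at this

theorem aux_tail (l : ℝ) (n : ℕ) :
    1 - Real.exp (-l) * ∑ k ∈ Finset.range n, l ^ k / (k.factorial : ℝ)
      = ∑' k : ℕ, Real.exp (-l) * (l ^ (k + n) / ((k + n).factorial : ℝ)) := by
  have h := (aux_hasSum l).summable.sum_add_tsum_nat_add n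
  rw [(aux_hasSum l).tsum_eq, ← Finset.mul_sum] at h
  linarith

theorem aux_step (l : ℝ) (k : ℕ) :
    ((k + 1 : ℕ) : ℝ) * (l ^ (k+1) / ((k+1).factorial : ℝ)) = l * (l ^ k / (k.factorial : ℝ)) := by
  have h3 : (k.factorial : ℝ) ≠ 0 := by positivity
  rw [Nat.factorial_succ]; push_cast; field_simp; ring

theorem aux_partial (l : ℝ) (n : ℕ) :
    ∑ i ∈ Finset.range (n + 1),
      (1 - Real.exp (-l) * ∑ k ∈ Finset.range (i + 1), l ^ k / (k.factorial : ℝ))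
    = ((n + 1 : ℕ) : ℝ) *
        (1 - Real.exp (-l) * ∑ k ∈ Finset.range (n + 1), l ^ k / (k.factorial : ℝ))
      + l * (Real.exp (-l) * ∑ k ∈ Finset.range n, l ^ k / (k.factorial : ℝ)) := by
  induction n with
  | zero => simp
  | succ n ih =>
    rw [Finset.sum_range_succ, ih]
    have h := aux_step l n
    rw [Finset.sum_range_succ _ (n+1), Finset.sum_range_succ _ n]
    push_cast at h ⊢
    linear_combination Real.exp (-l) * h

open Filter Topology in
theorem aux_main (l : ℝ) (hl : 0 < l) :
    HasSum (fun i : ℕ =>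
      (1 - Real.exp (-l) * ∑ k ∈ Finset.range (i + 1), l ^ k / (k.factorial : ℝ))) l := by
  have hnn : ∀ n : ℕ,
      0 ≤ 1 - Real.exp (-l) * ∑ k ∈ Finset.range n, l ^ k / (k.factorial : ℝ) := by
    intro n
    rw [aux_tail]
    exact tsum_nonneg fun k => by positivity
  have hs := (aux_hasSum l).summable
  have hG : Tendsto (fun n : ℕ => Real.exp (-l) * ∑ k ∈ Finset.range n, l ^ k / (k.factorial : ℝ))
      atTop (𝓝 1) := by
    have := (aux_hasSum l).tendsto_sum_nat
    simpa only [← Finset.mul_sum] using this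
  have hk : Summable (fun k : ℕ => (k : ℝ) * (Real.exp (-l) * (l ^ k / (k.factorial : ℝ)))) := by
    rw [← summable_nat_add_iff 1]
    refine (hs.mul_left l).congr fun k => ?_
    have h := aux_step l k
    linear_combination -Real.exp (-l) * h
  have hz : Tendsto (fun n : ℕ => (n : ℝ) *
      (1 - Real.exp (-l) * ∑ k ∈ Finset.range n, l ^ k / (k.factorial : ℝ))) atTop (𝓝 0) := by
    refine squeeze_zero (fun n => mul_nonneg n.cast_nonneg (hnn n)) (fun n => ?_)
      (tendsto_sum_nat_add
        (fun k : ℕ => (k : ℝ) * (Real.exp (-l) * (l ^ k / (k.factorial : ℝ)))))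
    rw [aux_tail, ← tsum_mul_left]
    refine Summable.tsum_le_tsum (fun k => ?_)
      (((summable_nat_add_iff n).2 hs).mul_left _) ((summable_nat_add_iff n).2 hk)
    gcongr
    omega
  rw [hasSum_iff_tendsto_nat_of_nonneg (fun i => hnn (i+1)), ← tendsto_add_atTop_iff_nat 1]
  simp only [aux_partial]
  have := ((tendsto_add_atTop_iff_nat 1).2 hz).add (hG.const_mul l)
  simpa using this

/-- For `Q ≥ 1`, the Poisson tail-sum `λ ↦ Σ_{i=Q}^{∞} (1 − F_P(λ,i))` is twice
differentiable on `(0,∞)` with second derivative `e^{−λ}·λ^{Q−1}/(Q−1)! > 0`;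
hence it is convex on `(0,∞)`. -/
theorem poisson_tail_sum_convex
    (Q : ℕ) (hQ : 1 ≤ Q)
    (S : ℝ → ℝ)
    (hS : ∀ l : ℝ, S l = ∑' i : ℕ,
      (1 - Real.exp (-l) * ∑ k ∈ Finset.range (Q + i + 1), l ^ k / (k.factorial : ℝ))) :
    (∀ lam : ℝ, 0 < lam →
      DifferentiableAt ℝ S lam ∧ DifferentiableAt ℝ (deriv S) lam ∧
      deriv (deriv S) lam = Real.exp (-lam) * lam ^ (Q - 1) / ((Q - 1).factorial : ℝ) ∧
      0 < Real.exp (-lam) * lam ^ (Q - 1) / ((Q - 1).factorial : ℝ)) ∧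
    ConvexOn ℝ (Set.Ioi (0 : ℝ)) S := by
  obtain ⟨m, rfl⟩ : ∃ m, Q = m + 1 := ⟨Q - 1, by omega⟩
  simp only [Nat.add_sub_cancel]
  have hform : ∀ l : ℝ, 0 < l → S l = l - ∑ i ∈ Finset.range (m + 1),
      (1 - Real.exp (-l) * ∑ k ∈ Finset.range (i + 1), l ^ k / (k.factorial : ℝ)) := by
    intro l hl
    have h := aux_main l hl
    have h2 := h.summable.sum_add_tsum_nat_add (m + 1)
    rw [h.tsum_eq] at h2
    rw [hS l, eq_sub_iff_add_eq, add_comm]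
    simp only [add_comm _ (m + 1)] at h2
    exact h2
  have hd1 : ∀ l : ℝ, 0 < l → HasDerivAt S
      (1 - Real.exp (-l) * ∑ k ∈ Finset.range (m + 1), l ^ k / (k.factorial : ℝ)) l := by
    intro l hl
    have h := (hasDerivAt_id l).sub (HasDerivAt.fun_sum (u := Finset.range (m + 1))
      fun i _ => (aux_deriv i l).const_sub 1)
    refine HasDerivAt.congr_of_eventuallyEq (h.congr_deriv ?_)
      (Filter.eventuallyEq_of_mem (Ioi_mem_nhds hl) fun x hx => hform x hx)
    rw [Finset.mul_sum]
    simp only [neg_neg, mul_div_assoc]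
  have hd2 : ∀ l : ℝ, 0 < l → HasDerivAt (deriv S)
      (Real.exp (-l) * l ^ m / (m.factorial : ℝ)) l := by
    intro l hl
    refine HasDerivAt.congr_of_eventuallyEq
      (((aux_deriv m l).const_sub 1).congr_deriv (neg_neg _))
      (Filter.eventuallyEq_of_mem (Ioi_mem_nhds hl) fun x hx => (hd1 x hx).deriv)
  refine ⟨fun l hl => ⟨(hd1 l hl).differentiableAt, (hd2 l hl).differentiableAt,
    (hd2 l hl).deriv, by positivity⟩, ?_⟩
  refine convexOn_of_deriv2_nonneg (convex_Ioi 0)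
    (fun x hx => (hd1 x hx).continuousAt.continuousWithinAt) ?_ ?_ ?_ <;> rw [interior_Ioi]
  · exact fun x hx => (hd1 x hx).differentiableAt.differentiableWithinAt
  · exact fun x hx => (hd2 x hx).differentiableAt.differentiableWithinAt
  · intro x hx
    have hx' : 0 < x := hx
    simp only [Function.iterate_succ, Function.iterate_zero, Function.comp_apply, id]
    rw [(hd2 x hx).deriv]
    positivity
end

section
/- Let h, p > 0 and let Q be a nonnegative integer. Then the function G_Q(λ) = h·Σ_{i=0}^{Q} (e^{−λ}·λ^i/i!)·(Q−i) + p·Σ_{i=Q}^{∞} (e^{−λ}·λ^i/i!)·(i−Q) is convex in λ on (0,∞). -/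
theorem nv_P_deriv (k : ℕ) (x : ℝ) :
    HasDerivAt (fun x : ℝ => Real.exp (-x) * x ^ (k+1) / ((k+1).factorial : ℝ))
      (Real.exp (-x) * x ^ k / (k.factorial : ℝ)
        - Real.exp (-x) * x ^ (k+1) / ((k+1).factorial : ℝ)) x := by
  have h1 : HasDerivAt (fun x : ℝ => Real.exp (-x)) (Real.exp (-x) * (-1)) x :=
    (hasDerivAt_neg x).exp
  have h2 := (h1.mul (hasDerivAt_pow (k+1) x)).div_const (((k+1).factorial : ℝ))
  refine h2.congr_deriv ?_
  have hk : (k.factorial : ℝ) ≠ 0 := by positivity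
  have hk1 : (k : ℝ) + 1 ≠ 0 := by positivity
  rw [Nat.factorial_succ]
  push_cast
  field_simp
  ring

theorem nv_S_deriv (k : ℕ) (x : ℝ) :
    HasDerivAt (fun x : ℝ => ∑ i ∈ Finset.range (k+1), Real.exp (-x) * x ^ i / (i.factorial : ℝ))
      (-(Real.exp (-x) * x ^ k / (k.factorial : ℝ))) x := by
  induction k with
  | zero =>
    have h1 : HasDerivAt (fun x : ℝ => Real.exp (-x)) (Real.exp (-x) * (-1)) x :=
      (hasDerivAt_neg x).exp
    simpa using h1
  | succ k ih =>
    simp_rw [Finset.sum_range_succ _ (k+1)]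
    exact (ih.add (nv_P_deriv k x)).congr_deriv (by ring)

theorem nv_A_succ (Q : ℕ) (x : ℝ) :
    ∑ i ∈ Finset.range (Q + 1 + 1),
      (Real.exp (-x) * x ^ i / (i.factorial : ℝ)) * (((Q + 1 : ℕ) : ℝ) - (i : ℝ)) =
    ∑ i ∈ Finset.range (Q + 1),
      (Real.exp (-x) * x ^ i / (i.factorial : ℝ)) * ((Q : ℝ) - (i : ℝ)) +
    ∑ i ∈ Finset.range (Q + 1), Real.exp (-x) * x ^ i / (i.factorial : ℝ) := by
  rw [Finset.sum_range_succ, sub_self, mul_zero, add_zero, ← Finset.sum_add_distrib]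
  refine Finset.sum_congr rfl fun i _ => ?_
  push_cast
  ring

theorem nv_A_deriv (Q : ℕ) (x : ℝ) :
    HasDerivAt (fun x : ℝ => ∑ i ∈ Finset.range (Q + 1),
      (Real.exp (-x) * x ^ i / (i.factorial : ℝ)) * ((Q : ℝ) - (i : ℝ)))
      (-∑ i ∈ Finset.range Q, Real.exp (-x) * x ^ i / (i.factorial : ℝ)) x := by
  induction Q with
  | zero => simpa using hasDerivAt_const x (0:ℝ)
  | succ Q ih =>
    simp_rw [nv_A_succ]
    refine (ih.add (nv_S_deriv Q x)).congr_deriv ?_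
    rw [Finset.sum_range_succ]
    ring

theorem nv_A_convex (Q : ℕ) :
    ConvexOn ℝ (Set.Ioi (0 : ℝ)) (fun x : ℝ => ∑ i ∈ Finset.range (Q + 1),
      (Real.exp (-x) * x ^ i / (i.factorial : ℝ)) * ((Q : ℝ) - (i : ℝ))) := by
  refine MonotoneOn.convexOn_of_deriv (convex_Ioi 0)
    (fun x _ => (nv_A_deriv Q x).continuousAt.continuousWithinAt)
    (fun x _ => (nv_A_deriv Q x).differentiableAt.differentiableWithinAt) ?_
  rw [interior_Ioi, funext fun x => (nv_A_deriv Q x).deriv]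
  cases Q with
  | zero => simpa using monotoneOn_const
  | succ k =>
    refine AntitoneOn.neg (antitoneOn_of_deriv_nonpos (convex_Ioi 0)
      (fun x _ => (nv_S_deriv k x).continuousAt.continuousWithinAt)
      (fun x _ => (nv_S_deriv k x).differentiableAt.differentiableWithinAt) ?_)
    intro x hx
    rw [interior_Ioi] at hx
    have hx : 0 < x := hx
    rw [(nv_S_deriv k x).deriv]
    have : 0 ≤ Real.exp (-x) * x ^ k / (k.factorial : ℝ) := by positivity
    linarith

theorem nv_hasSum (Q : ℕ) (x : ℝ) :
    HasSum (fun i : ℕ => (Real.exp (-x) * x ^ i / (i.factorial : ℝ)) * ((i : ℝ) - (Q : ℝ)))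
      (x - Q) := by
  have h0 : HasSum (fun i : ℕ => x ^ i / (i.factorial : ℝ)) (Real.exp x) := by
    rw [Real.exp_eq_exp_ℝ]; exact NormedSpace.expSeries_div_hasSum_exp x
  have h1 : HasSum (fun i : ℕ => x ^ i / (i.factorial : ℝ) * i) (x * Real.exp x) := by
    rw [← hasSum_nat_add_iff' 1]
    simp only [Finset.range_one, Finset.sum_singleton, Nat.cast_zero, mul_zero, sub_zero]
    refine (h0.mul_left x).congr_fun ?_
    intro i
    have hk : (i.factorial : ℝ) ≠ 0 := by positivity
    have hk1 : (i : ℝ) + 1 ≠ 0 := by positivity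
    rw [Nat.factorial_succ]
    push_cast
    field_simp
    ring
  have h2 := (h1.sub (h0.mul_right (Q : ℝ))).mul_left (Real.exp (-x))
  have e : Real.exp (-x) * Real.exp x = 1 := by rw [← Real.exp_add]; simp
  have e2 : Real.exp (-x) * (x * Real.exp x - Real.exp x * Q) = x - Q := by
    linear_combination (x - Q) * e
  rw [e2] at h2
  refine h2.congr_fun ?_
  intro i
  ring

theorem nv_tsum (Q : ℕ) (x : ℝ) :
    ∑' i : ℕ, (Real.exp (-x) * x ^ (Q + i) / ((Q + i).factorial : ℝ)) * (i : ℝ) =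
    ∑ i ∈ Finset.range (Q + 1),
      (Real.exp (-x) * x ^ i / (i.factorial : ℝ)) * ((Q : ℝ) - (i : ℝ)) + (x - Q) := by
  have h := (hasSum_nat_add_iff' Q).2 (nv_hasSum Q x)
  have h' := h.tsum_eq
  rw [Finset.sum_range_succ, sub_self, mul_zero, add_zero]
  trans
  · trans
    swap
    · exact h'
    refine tsum_congr fun i => ?_
    rw [add_comm Q i]
    push_cast
    ring
  · rw [sub_eq_add_neg, add_comm, ← Finset.sum_neg_distrib]
    congr 1
    refine Finset.sum_congr rfl fun i _ => ?_
    ring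


/-- Convexity of the Poisson-demand newsvendor cost `G_Q(λ)` in the rate `λ`
on `(0,∞)`, for fixed order quantity `Q`. -/
theorem newsvendor_poisson_convex_in_rate
    (h p : ℝ) (hh : 0 < h) (hp : 0 < p) (Q : ℕ) :
    ConvexOn ℝ (Set.Ioi (0 : ℝ)) (fun lam : ℝ =>
      h * ∑ i ∈ Finset.range (Q + 1),
            (Real.exp (-lam) * lam ^ i / (i.factorial : ℝ)) * ((Q : ℝ) - (i : ℝ)) +
      p * ∑' i : ℕ,
            (Real.exp (-lam) * lam ^ (Q + i) / ((Q + i).factorial : ℝ)) * (i : ℝ)) := by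
  simp_rw [nv_tsum]
  have hA := nv_A_convex Q
  have hl : ConvexOn ℝ (Set.Ioi (0 : ℝ)) (fun x : ℝ => x - (Q : ℝ)) :=
    (convexOn_id (convex_Ioi 0)).sub (concaveOn_const _ (convex_Ioi 0))
  exact (hA.smul hh.le).add ((hA.add hl).smul hp.le)
end

section
/- Fix Q > 0 and h, p > 0, and define G_Q(λ) = ((h+p)/λ)·e^{−λQ} + h·Q − h/λ for λ > 0. Then G_Q admits a unique global minimizer λ* ∈ (0,∞); moreover G_Q is strictly decreasing on (0, λ*] and strictly increasing on [λ*, ∞). -/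
/-- The exponential-demand newsvendor cost at fixed `Q`, as a function of the rate
`λ` on `(0,∞)`, admits a unique global minimizer `λ*`; it is strictly decreasing
on `(0, λ*]` and strictly increasing on `[λ*, ∞)`. -/
theorem newsvendor_exponential_unique_min_in_rate
    (Q h p : ℝ) (hQ : 0 < Q) (hh : 0 < h) (hp : 0 < p)
    (G : ℝ → ℝ)
    (hG : ∀ lam : ℝ, G lam = ((h + p) / lam) * Real.exp (-(lam * Q)) + h * Q - h / lam) :
    ∃ lstar : ℝ, 0 < lstar ∧
      (∀ lam : ℝ, 0 < lam → G lstar ≤ G lam) ∧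
      (∀ l' : ℝ, 0 < l' → (∀ lam : ℝ, 0 < lam → G l' ≤ G lam) → l' = lstar) ∧
      StrictAntiOn G (Set.Ioc (0 : ℝ) lstar) ∧
      StrictMonoOn G (Set.Ici lstar) := by
  obtain ⟨φ, hφ⟩ : ∃ φ : ℝ → ℝ, ∀ x, φ x = h - (h + p) * (1 + x * Q) * Real.exp (-(x * Q)) :=
    ⟨_, fun _ => rfl⟩
  have hφ' : φ = fun x => h - (h + p) * (1 + x * Q) * Real.exp (-(x * Q)) := funext hφ
  have hG' : G = fun lam => ((h + p) / lam) * Real.exp (-(lam * Q)) + h * Q - h / lam := funext hG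
  have hexp : ∀ x : ℝ, HasDerivAt (fun x : ℝ => Real.exp (-(x * Q)))
      (Real.exp (-(x * Q)) * (-(1 * Q))) x := fun x =>
    (((hasDerivAt_id x).mul_const Q).neg).exp
  have hdφ : ∀ x : ℝ, HasDerivAt φ ((h + p) * Q ^ 2 * x * Real.exp (-(x * Q))) x := by
    intro x
    rw [hφ']
    have h1 : HasDerivAt (fun x : ℝ => (h + p) * (1 + x * Q)) ((h + p) * (1 * Q)) x :=
      ((((hasDerivAt_id x).mul_const Q).const_add 1).const_mul (h + p))
    have h2 := (h1.mul (hexp x)).const_sub h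
    refine h2.congr_deriv ?_
    ring
  have hcφ : Continuous φ := by
    rw [hφ']; fun_prop
  have hmono : StrictMonoOn φ (Set.Ici 0) := by
    apply strictMonoOn_of_deriv_pos (convex_Ici 0) hcφ.continuousOn
    intro x hx
    rw [interior_Ici] at hx
    have hx' : 0 < x := hx
    rw [(hdφ x).deriv]
    positivity
  have h0 : φ 0 < 0 := by rw [hφ]; simp; linarith
  obtain ⟨b, hb, hφb⟩ : ∃ b : ℝ, 0 < b ∧ 0 < φ b := by
    refine ⟨2 * (h + p) / h / Q, by positivity, ?_⟩
    rw [hφ, div_mul_cancel₀ _ hQ.ne']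
    obtain ⟨x, hx⟩ : ∃ x, x = 2 * (h + p) / h := ⟨_, rfl⟩
    have hx0 : 0 < x := by rw [hx]; positivity
    have hxh : h * x = 2 * (h + p) := by rw [hx]; field_simp
    rw [← hx, Real.exp_neg, ← div_eq_mul_inv, sub_pos, div_lt_iff₀ (Real.exp_pos x)]
    have hq := Real.quadratic_le_exp_of_nonneg hx0.le
    have h3 := mul_le_mul_of_nonneg_left hq hh.le
    have h4 : h * (1 + x + x ^ 2 / 2) = h + h * x + (h * x) * x / 2 := by ring
    rw [h4, hxh] at h3
    nlinarith
  obtain ⟨c, hc, hφc⟩ := intermediate_value_Icc hb.le hcφ.continuousOn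
    (show (0 : ℝ) ∈ Set.Icc (φ 0) (φ b) from ⟨h0.le, hφb.le⟩)
  have hc0 : 0 < c := by
    rcases hc.1.lt_or_eq with h1 | h1
    · exact h1
    · rw [← h1] at hφc; linarith
  have hdG : ∀ x : ℝ, 0 < x → HasDerivAt G (φ x / x ^ 2) x := by
    intro x hx
    rw [hG', hφ]
    have hi : ∀ k : ℝ, HasDerivAt (fun x : ℝ => k / x) ((0 * x - k * 1) / x ^ 2) x := fun k =>
      (hasDerivAt_const x k).div (hasDerivAt_id x) hx.ne'
    refine ((((hi (h + p)).mul (hexp x)).add_const (h * Q)).sub (hi h)).congr_deriv ?_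
    field_simp
    ring
  have hanti : StrictAntiOn G (Set.Ioc 0 c) := by
    apply strictAntiOn_of_deriv_neg (convex_Ioc 0 c)
    · intro x hx
      exact (hdG x hx.1).continuousAt.continuousWithinAt
    · intro x hx
      rw [interior_Ioc] at hx
      rw [(hdG x hx.1).deriv]
      have : φ x < φ c := hmono hx.1.le hc0.le hx.2
      exact div_neg_of_neg_of_pos (by linarith) (pow_pos hx.1 2)
  have hmon : StrictMonoOn G (Set.Ici c) := by
    apply strictMonoOn_of_deriv_pos (convex_Ici c)
    · intro x hx
      exact (hdG x (hc0.trans_le hx)).continuousAt.continuousWithinAt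
    · intro x hx
      rw [interior_Ici] at hx
      have hx' : c < x := hx
      have hx0 : 0 < x := hc0.trans hx'
      rw [(hdG x hx0).deriv]
      have : φ c < φ x := hmono hc0.le hx0.le hx'
      exact div_pos (by linarith) (pow_pos hx0 2)
  have hlt : ∀ x : ℝ, 0 < x → x ≠ c → G c < G x := by
    intro x hx hne
    rcases lt_or_gt_of_ne hne with h1 | h1
    · exact hanti ⟨hx, h1.le⟩ ⟨hc0, le_rfl⟩ h1
    · exact hmon (Set.mem_Ici.2 le_rfl) (Set.mem_Ici.2 h1.le) h1
  refine ⟨c, hc0, ?_, ?_, hanti, hmon⟩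
  · intro x hx
    by_cases hxc : x = c
    · rw [hxc]
    · exact (hlt x hx hxc).le
  · intro x hx hmin
    by_contra hne
    exact absurd (hmin c hc0) (not_le.2 (hlt x hx hne))
end

section
/- Let h, p > 0 and 0 < λ_lb < λ_ub. Define G_λ(Q) = ((h+p)/λ)·( (h/(h+p))·(λQ − 1) + e^{−λQ} ), and set Q*_lb = (1/λ_ub)·ln((h+p)/h) and Q*_ub = (1/λ_lb)·ln((h+p)/h), which are the optimal newsvendor order quantities for exponential demands with rates λ_ub and λ_lb respectively. Then for every λ ∈ [λ_lb, λ_ub] and every Q ∈ [Q*_lb, Q*_ub], G_{λ_ub}(Q*_lb) ≤ G_λ(Q) ≤ max{ G_{λ_lb}(Q*_lb), G_{λ_ub}(Q*_ub) }. -/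
/-- Cost bounds for the exponential-demand newsvendor over a confidence interval
`[λ_lb, λ_ub]` for the rate: for every `λ ∈ [λ_lb, λ_ub]` and every order quantity
`Q ∈ [Q*_lb, Q*_ub]`, the cost `G_λ(Q)` lies between `G_{λ_ub}(Q*_lb)` and
`max{G_{λ_lb}(Q*_lb), G_{λ_ub}(Q*_ub)}`. -/
theorem newsvendor_exponential_cost_bounds
    (h p : ℝ) (hh : 0 < h) (hp : 0 < p)
    (lamlb lamub : ℝ) (hlb : 0 < lamlb) (hlbub : lamlb < lamub)
    (G : ℝ → ℝ → ℝ)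
    (hG : ∀ lam Q : ℝ, G lam Q =
      ((h + p) / lam) * ((h / (h + p)) * (lam * Q - 1) + Real.exp (-(lam * Q))))
    (Qslb Qsub : ℝ)
    (hQslb : Qslb = (1 / lamub) * Real.log ((h + p) / h))
    (hQsub : Qsub = (1 / lamlb) * Real.log ((h + p) / h)) :
    ∀ lam ∈ Set.Icc lamlb lamub, ∀ Q ∈ Set.Icc Qslb Qsub,
      G lamub Qslb ≤ G lam Q ∧ G lam Q ≤ max (G lamlb Qslb) (G lamub Qsub) := by
  have hub : 0 < lamub := hlb.trans hlbub
  have hs : 0 < h + p := by positivity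
  obtain ⟨L, hL⟩ : ∃ L, L = Real.log ((h + p) / h) := ⟨_, rfl⟩
  rw [← hL] at hQslb hQsub
  have hLpos : 0 < L := by
    rw [hL]; apply Real.log_pos; rw [lt_div_iff₀ hh]; linarith
  have hexpL : Real.exp L = (h + p) / h := by
    rw [hL, Real.exp_log (by positivity)]
  have hexpnL : (h + p) * Real.exp (-L) = h := by
    rw [Real.exp_neg, hexpL]; field_simp
  have hF : ∀ a Q : ℝ, 0 < a →
      a * G a Q = h * (a * Q - 1) + (h + p) * Real.exp (-(a * Q)) := by
    intro a Q ha
    rw [hG]; field_simp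
  have hmin : ∀ a Q : ℝ, 0 < a → h * L ≤ a * G a Q := by
    intro a Q ha
    rw [hF a Q ha]
    have h1 := Real.add_one_le_exp (L - a * Q)
    have h2 : (h + p) * Real.exp (-(a * Q)) = h * Real.exp (L - a * Q) := by
      rw [show -(a * Q) = -L + (L - a * Q) by ring, Real.exp_add, ← mul_assoc, hexpnL]
    rw [h2]
    nlinarith [mul_le_mul_of_nonneg_left h1 hh.le]
  have hatmin : ∀ a Q : ℝ, 0 < a → a * Q = L → a * G a Q = h * L := by
    intro a Q ha hq
    rw [hF a Q ha, hq, hexpnL]; ring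
  have hminle : ∀ a Q Q' : ℝ, 0 < a → a * Q = L → G a Q ≤ G a Q' := by
    intro a Q Q' ha hq
    have h1 := hatmin a Q ha hq
    have h2 := hmin a Q' ha
    exact le_of_mul_le_mul_left (h1.le.trans h2) ha
  have e1 : lamub * Qslb = L := by rw [hQslb]; field_simp
  have e2 : lamlb * Qsub = L := by rw [hQsub]; field_simp
  have hconv : ∀ x y s t : ℝ, 0 ≤ s → 0 ≤ t → s + t = 1 →
      Real.exp (-(s * x + t * y)) ≤ s * Real.exp (-x) + t * Real.exp (-y) := by
    intro x y s t h1 h2 h3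
    have := convexOn_exp.2 (Set.mem_univ (-x)) (Set.mem_univ (-y)) h1 h2 h3
    simp only [smul_eq_mul] at this
    rw [show -(s * x + t * y) = s * -x + t * -y by ring]
    exact this
  have hcomb : ∀ a b x : ℝ, a < b → a ≤ x → x ≤ b →
      ∃ s t : ℝ, 0 ≤ s ∧ 0 ≤ t ∧ s + t = 1 ∧ x = s * a + t * b := by
    intro a b x hab h1 h2
    have hd : 0 < b - a := by linarith
    refine ⟨(b - x) / (b - a), (x - a) / (b - a), div_nonneg (by linarith) hd.le,
      div_nonneg (by linarith) hd.le, ?_, ?_⟩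
    · field_simp; ring
    · field_simp; ring
  have hQQ : Qslb < Qsub := by
    rw [hQslb, hQsub]
    exact mul_lt_mul_of_pos_right (one_div_lt_one_div_of_lt hlb hlbub) hLpos
  rintro lam ⟨hl1, hl2⟩ Q ⟨hq1, hq2⟩
  have hlam : 0 < lam := by linarith
  constructor
  · have h1 := hatmin lamub Qslb hub e1
    have h2 := hmin lam Q hlam
    have h0 : 0 < G lam Q := by
      by_contra hc
      have := mul_pos hh hLpos
      nlinarith
    have h3 : lam * G lam Q ≤ lamub * G lam Q := mul_le_mul_of_nonneg_right hl2 h0.le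
    exact le_of_mul_le_mul_left (by linarith) hub
  · -- convexity in Q
    have hQc : ∀ a M : ℝ, 0 < a → G a Qslb ≤ M → G a Qsub ≤ M → G a Q ≤ M := by
      intro a M ha m1 m2
      obtain ⟨s, t, hs0, ht0, hst, hx⟩ := hcomb _ _ Q hQQ hq1 hq2
      have c := hconv (a * Qslb) (a * Qsub) s t hs0 ht0 hst
      rw [show s * (a * Qslb) + t * (a * Qsub) = a * Q by rw [hx]; ring] at c
      have c' := mul_le_mul_of_nonneg_left c hs.le
      have k1 := mul_le_mul_of_nonneg_left (mul_le_mul_of_nonneg_left m1 ha.le) hs0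
      have k2 := mul_le_mul_of_nonneg_left (mul_le_mul_of_nonneg_left m2 ha.le) ht0
      rw [hF a _ ha] at k1 k2
      refine le_of_mul_le_mul_left ?_ ha
      rw [hF a _ ha]
      have ht : t = 1 - s := by linarith
      subst ht
      have : h * (a * Q - 1) = s * (h * (a * Qslb - 1)) + (1 - s) * (h * (a * Qsub - 1)) := by
        rw [hx]; ring
      rw [this]
      nlinarith
    have A : G lamlb Q ≤ max (G lamlb Qslb) (G lamub Qsub) :=
      hQc _ _ hlb (le_max_left _ _) ((hminle _ _ _ hlb e2).trans (le_max_left _ _))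
    have B : G lamub Q ≤ max (G lamlb Qslb) (G lamub Qsub) :=
      hQc _ _ hub ((hminle _ _ _ hub e1).trans (le_max_right _ _)) (le_max_right _ _)
    generalize max (G lamlb Qslb) (G lamub Qsub) = M at A B
    obtain ⟨s, t, hs0, ht0, hst, hx⟩ := hcomb _ _ lam hlbub hl1 hl2
    have c := hconv (lamlb * Q) (lamub * Q) s t hs0 ht0 hst
    rw [show s * (lamlb * Q) + t * (lamub * Q) = lam * Q by rw [hx]; ring] at c
    have c' := mul_le_mul_of_nonneg_left c hs.le
    have k1 := mul_le_mul_of_nonneg_left (mul_le_mul_of_nonneg_left A hlb.le) hs0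
    have k2 := mul_le_mul_of_nonneg_left (mul_le_mul_of_nonneg_left B hub.le) ht0
    rw [hF _ _ hlb] at k1
    rw [hF _ _ hub] at k2
    refine le_of_mul_le_mul_left ?_ hlam
    rw [hF _ _ hlam]
    have ht : t = 1 - s := by linarith
    subst ht
    have e3 : h * (lam * Q - 1) =
        s * (h * (lamlb * Q - 1)) + (1 - s) * (h * (lamub * Q - 1)) := by
      rw [hx]; ring
    have e4 : lam * M = s * (lamlb * M) + (1 - s) * (lamub * M) := by
      rw [hx]; ring
    rw [e3, e4]
    nlinarith
end
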